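/- (Necessary condition, no movers, second difference) Under the IV assumptions (Independence, Relevance, Monotonicity, Exclusion), it holds that ΔE[D∧ − D2 | Z] = μ({C1,A2}) − μ({N1,C2}); in particular this quantity equals zero whenever μ({C1,A2}) = μ({N1,C2}). (Proposition 2, eq. (10)) -/

import Mathlib

open MeasureTheory ProbabilityTheory

noncomputable section

variable {Ω : Type*} [MeasurableSpace Ω]

/-- Observed first-part treatment: `D1 = D1(1)·Z + D1(0)·(1−Z)`. -/
def obsD1 (Z : Ω → ℝ) (D1 : Bool → Ω → ℝ) (ω : Ω) : ℝ :=
  D1 true ω * Z ω + D1 false ω * (1 - Z ω)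

/-- Observed second-part treatment. -/
def obsD2 (Z : Ω → ℝ) (D1 : Bool → Ω → ℝ) (D2 : Bool → Bool → Ω → ℝ) (ω : Ω) : ℝ :=
  (D2 true true ω * obsD1 Z D1 ω + D2 true false ω * (1 - obsD1 Z D1 ω)) * Z ω +
  (D2 false true ω * obsD1 Z D1 ω + D2 false false ω * (1 - obsD1 Z D1 ω)) * (1 - Z ω)

/-- Summary treatment `D∧ = D1·D2`. -/
def obsDand (Z : Ω → ℝ) (D1 : Bool → Ω → ℝ) (D2 : Bool → Bool → Ω → ℝ) (ω : Ω) : ℝ :=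
  obsD1 Z D1 ω * obsD2 Z D1 D2 ω

/-- Summary treatment `D∨ = D1 + D2 − D1·D2`. -/
def obsDor (Z : Ω → ℝ) (D1 : Bool → Ω → ℝ) (D2 : Bool → Bool → Ω → ℝ) (ω : Ω) : ℝ :=
  obsD1 Z D1 ω + obsD2 Z D1 D2 ω - obsD1 Z D1 ω * obsD2 Z D1 D2 ω

/-- Observed outcome `Y = Σ_{d1,d2} Y(Z,d1,d2)·1{D1=d1, D2=d2}`, written out using that the
observed treatments and the instrument are {0,1}-valued. The first index of `Yp` is `z`, the
second is `d1`, the third is `d2`. -/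
def obsY (Z : Ω → ℝ) (D1 : Bool → Ω → ℝ) (D2 : Bool → Bool → Ω → ℝ)
    (Yp : Bool → Bool → Bool → Ω → ℝ) (ω : Ω) : ℝ :=
  (Yp true true true ω * obsD1 Z D1 ω * obsD2 Z D1 D2 ω +
   Yp true false true ω * (1 - obsD1 Z D1 ω) * obsD2 Z D1 D2 ω +
   Yp true true false ω * obsD1 Z D1 ω * (1 - obsD2 Z D1 D2 ω) +
   Yp true false false ω * (1 - obsD1 Z D1 ω) * (1 - obsD2 Z D1 D2 ω)) * Z ω +
  (Yp false true true ω * obsD1 Z D1 ω * obsD2 Z D1 D2 ω +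
   Yp false false true ω * (1 - obsD1 Z D1 ω) * obsD2 Z D1 D2 ω +
   Yp false true false ω * obsD1 Z D1 ω * (1 - obsD2 Z D1 D2 ω) +
   Yp false false false ω * (1 - obsD1 Z D1 ω) * (1 - obsD2 Z D1 D2 ω)) * (1 - Z ω)

/-- `ΔE[A|Z] := E[A | Z = 1] − E[A | Z = 0]`, expectations under conditional measures. -/
def dE (μ : Measure Ω) (Z A : Ω → ℝ) : ℝ :=
  (∫ ω, A ω ∂(μ[|Z ⁻¹' {1}])) - (∫ ω, A ω ∂(μ[|Z ⁻¹' {0}]))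

/-- The full-complier event `{C1,C2}`. -/
def CCev (D1 : Bool → Ω → ℝ) (D2 : Bool → Bool → Ω → ℝ) : Set Ω :=
  {ω | D1 true ω - D1 false ω = 1 ∧ D2 true true ω - D2 false false ω = 1}

/-- The mover event `{C1,N2}`. -/
def CNev (D1 : Bool → Ω → ℝ) (D2 : Bool → Bool → Ω → ℝ) : Set Ω :=
  {ω | D1 true ω - D1 false ω = 1 ∧ D2 true true ω = 0 ∧ D2 false false ω = 0}

/-- The mover event `{C1,A2}`. -/
def CAev (D1 : Bool → Ω → ℝ) (D2 : Bool → Bool → Ω → ℝ) : Set Ω :=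
  {ω | D1 true ω - D1 false ω = 1 ∧ D2 true true ω = 1 ∧ D2 false false ω = 1}

/-- The mover event `{N1,C2}`. -/
def NCev (D1 : Bool → Ω → ℝ) (D2 : Bool → Bool → Ω → ℝ) : Set Ω :=
  {ω | D1 true ω = 0 ∧ D1 false ω = 0 ∧ D2 true false ω - D2 false false ω = 1}

/-- The mover event `{A1,C2}`. -/
def ACev (D1 : Bool → Ω → ℝ) (D2 : Bool → Bool → Ω → ℝ) : Set Ω :=
  {ω | D1 true ω = 1 ∧ D1 false ω = 1 ∧ D2 true true ω - D2 false true ω = 1}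

/-! The difference `D2 − D∧` is the indicator of receiving the second treatment without the first.
By Independence, `ΔE[D2 − D∧ | Z]` is therefore the mean effect of switching `Z` from `0` to `1` on
this indicator. Under Monotonicity the switch turns the indicator on exactly on `{N1,C2}`, turns it
off exactly on `{C1,A2}`, and leaves it unchanged elsewhere. -/

section Conditioning

variable {μ : Measure Ω} [IsFiniteMeasure μ]

theorem integral_cond_preimage_of_indepFun {E β : Type*} [NormedAddCommGroup E] [NormedSpace ℝ E]
    [MeasurableSpace E] [BorelSpace E] [MeasurableSpace β] {W : Ω → E} {Z : Ω → β} {s : Set β}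
    (hindep : IndepFun W Z μ) (hW : AEStronglyMeasurable W μ) (hZ : Measurable Z)
    (hs : MeasurableSet s) (hpos : μ (Z ⁻¹' s) ≠ 0) :
    ∫ ω, W ω ∂μ[|Z ⁻¹' s] = ∫ ω, W ω ∂μ := by
  have hset : ∫ ω in Z ⁻¹' s, W ω ∂μ = μ.real (Z ⁻¹' s) • ∫ ω, W ω ∂μ :=
    ((IndepFun_iff_Indep Z W μ).1 hindep.symm).setIntegral_eq_smul (f := id) hZ.comap_le
      hW.aemeasurable ⟨s, hs, rfl⟩ hW.aestronglyMeasurable_id_map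
  have hreal : μ.real (Z ⁻¹' s) ≠ 0 := (measureReal_ne_zero_iff).2 hpos
  rw [ProbabilityTheory.cond, integral_smul_measure, hset, ENNReal.toReal_inv]
  exact inv_smul_smul₀ hreal _

theorem dE_eq_integral_sub_integral {Z A : Ω → ℝ} {W : Bool → Ω → ℝ} (hZ : Measurable Z)
    (hW : ∀ z, AEStronglyMeasurable (W z) μ) (hindep : ∀ z, IndepFun (W z) Z μ)
    (hpos₁ : μ (Z ⁻¹' {1}) ≠ 0) (hpos₀ : μ (Z ⁻¹' {0}) ≠ 0)
    (hA₁ : Set.EqOn A (W true) (Z ⁻¹' {1})) (hA₀ : Set.EqOn A (W false) (Z ⁻¹' {0})) :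
    dE μ Z A = ∫ ω, W true ω ∂μ - ∫ ω, W false ω ∂μ := by
  have hmean {x : ℝ} {z : Bool} (hpos : μ (Z ⁻¹' {x}) ≠ 0) (hA : Set.EqOn A (W z) (Z ⁻¹' {x})) :
      ∫ ω, A ω ∂μ[|Z ⁻¹' {x}] = ∫ ω, W z ω ∂μ := by
    have hx : MeasurableSet ({x} : Set ℝ) := measurableSet_singleton x
    rw [← integral_cond_preimage_of_indepFun (hindep z) (hW z) hZ hx hpos]
    exact integral_congr_ae (ae_cond_of_forall_mem (hZ hx) hA)
  rw [dE, hmean hpos₁ hA₁, hmean hpos₀ hA₀]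

end Conditioning

theorem measure_preimage_zero_ne_zero {μ : Measure Ω} [IsProbabilityMeasure μ] {Z : Ω → ℝ}
    (hZ : Measurable Z) (hZ01 : ∀ ω, Z ω = 0 ∨ Z ω = 1) (hlt : μ (Z ⁻¹' {1}) < 1) :
    μ (Z ⁻¹' {0}) ≠ 0 := by
  have hcompl : Z ⁻¹' {0} = (Z ⁻¹' {1})ᶜ := by
    ext ω
    rcases hZ01 ω with h | h <;> simp [h]
  rw [hcompl, Ne, prob_compl_eq_zero_iff (hZ (measurableSet_singleton 1))]
  exact hlt.ne

/-- The potential indicator `1{D1(z) = 0, D2(z,0) = 1}` of receiving only the second treatment when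
the instrument is set to `z`, for `{0,1}`-valued potential treatments. It is the potential variable
observed as `D2 − D∧`. -/
def secondOnly {α : Type*} (D1 : Bool → α → ℝ) (D2 : Bool → Bool → α → ℝ) (z : Bool) (ω : α) : ℝ :=
  (1 - D1 z ω) * D2 z false ω

section Pointwise

variable {α : Type*} {D1 : Bool → α → ℝ} {D2 : Bool → Bool → α → ℝ} {Z : α → ℝ} {ω : α}

theorem obsDand_sub_obsD2_of_eq_one (hD1 : D1 true ω = 0 ∨ D1 true ω = 1) (hZ : Z ω = 1) :
    obsDand Z D1 D2 ω - obsD2 Z D1 D2 ω = -secondOnly D1 D2 true ω := by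
  rcases hD1 with h | h <;> simp [obsDand, obsD2, obsD1, secondOnly, hZ, h]

theorem obsDand_sub_obsD2_of_eq_zero (hD1 : D1 false ω = 0 ∨ D1 false ω = 1) (hZ : Z ω = 0) :
    obsDand Z D1 D2 ω - obsD2 Z D1 D2 ω = -secondOnly D1 D2 false ω := by
  rcases hD1 with h | h <;> simp [obsDand, obsD2, obsD1, secondOnly, hZ, h]

theorem indicator_CAev_of_complier (h₀ : D1 false ω = 0) (h₁ : D1 true ω = 1)
    (hff : D2 false false ω = 0 ∨ D2 false false ω = 1)
    (htt : D2 true true ω = 0 ∨ D2 true true ω = 1) (hmono : D2 false false ω ≤ D2 true true ω) :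
    (CAev D1 D2).indicator 1 ω = D2 false false ω := by
  rcases hff with hff | hff <;> rcases htt with htt | htt
  case inr.inl => linarith
  all_goals simp [CAev, h₀, h₁, hff, htt]

theorem indicator_NCev_of_neverTaker (h₀ : D1 false ω = 0) (h₁ : D1 true ω = 0)
    (hff : D2 false false ω = 0 ∨ D2 false false ω = 1)
    (htf : D2 true false ω = 0 ∨ D2 true false ω = 1) (hmono : D2 false false ω ≤ D2 true false ω) :
    (NCev D1 D2).indicator 1 ω = D2 true false ω - D2 false false ω := by
  rcases hff with hff | hff <;> rcases htf with htf | htf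
  case inr.inl => linarith
  all_goals simp [NCev, h₀, h₁, hff, htf]

theorem secondOnly_true_sub_secondOnly_false (hD1 : ∀ z, D1 z ω = 0 ∨ D1 z ω = 1)
    (hD2 : ∀ z d, D2 z d ω = 0 ∨ D2 z d ω = 1) (hmono1 : D1 false ω ≤ D1 true ω)
    (hmono2 : D2 false true ω * D1 false ω + D2 false false ω * (1 - D1 false ω) ≤
      D2 true true ω * D1 true ω + D2 true false ω * (1 - D1 true ω)) :
    secondOnly D1 D2 true ω - secondOnly D1 D2 false ω =
      (NCev D1 D2).indicator 1 ω - (CAev D1 D2).indicator 1 ω := by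
  rcases hD1 false with h₀ | h₀ <;> rcases hD1 true with h₁ | h₁
  case inl.inl =>
    have hle : D2 false false ω ≤ D2 true false ω := by simpa [h₀, h₁] using hmono2
    have hCA : ω ∉ CAev D1 D2 := by simp [CAev, h₀, h₁]
    have hNC := indicator_NCev_of_neverTaker h₀ h₁ (hD2 false false) (hD2 true false) hle
    simp [secondOnly, h₀, h₁, hNC, hCA]
  case inl.inr =>
    have hle : D2 false false ω ≤ D2 true true ω := by simpa [h₀, h₁] using hmono2
    have hCA := indicator_CAev_of_complier h₀ h₁ (hD2 false false) (hD2 true true) hle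
    have hNC : ω ∉ NCev D1 D2 := by simp [NCev, h₁]
    simp [secondOnly, h₀, h₁, hCA, hNC]
  case inr.inl => linarith
  case inr.inr =>
    have hCA : ω ∉ CAev D1 D2 := by simp [CAev, h₀, h₁]
    have hNC : ω ∉ NCev D1 D2 := by simp [NCev, h₁]
    simp [secondOnly, h₀, h₁, hCA, hNC]

end Pointwise

section Expectations

variable {μ : Measure Ω} {Z : Ω → ℝ} {D1 : Bool → Ω → ℝ} {D2 : Bool → Bool → Ω → ℝ}

theorem measurableSet_CAev (hD1 : ∀ z, Measurable (D1 z)) (hD2 : ∀ z d, Measurable (D2 z d)) :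
    MeasurableSet (CAev D1 D2) :=
  (((hD1 true).sub (hD1 false)) (measurableSet_singleton 1)).inter
    ((hD2 true true (measurableSet_singleton 1)).inter
      (hD2 false false (measurableSet_singleton 1)))

theorem measurableSet_NCev (hD1 : ∀ z, Measurable (D1 z)) (hD2 : ∀ z d, Measurable (D2 z d)) :
    MeasurableSet (NCev D1 D2) :=
  (hD1 true (measurableSet_singleton 0)).inter
    ((hD1 false (measurableSet_singleton 0)).inter
      (((hD2 true false).sub (hD2 false false)) (measurableSet_singleton 1)))

theorem integrable_secondOnly [IsFiniteMeasure μ] {z : Bool} (hD1meas : Measurable (D1 z))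
    (hD2meas : Measurable (D2 z false)) (hD1 : ∀ ω, D1 z ω = 0 ∨ D1 z ω = 1)
    (hD2 : ∀ ω, D2 z false ω = 0 ∨ D2 z false ω = 1) :
    Integrable (secondOnly D1 D2 z) μ := by
  have hmeas : Measurable (secondOnly D1 D2 z) := (hD1meas.const_sub 1).mul hD2meas
  refine .of_bound hmeas.aestronglyMeasurable 1 (ae_of_all _ fun ω => ?_)
  rcases hD1 ω with h₁ | h₁ <;> rcases hD2 ω with h₂ | h₂ <;> simp [secondOnly, h₁, h₂]

theorem dE_obsDand_sub_obsD2 [IsFiniteMeasure μ] (hZ : Measurable Z)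
    (hint : ∀ z, Integrable (secondOnly D1 D2 z) μ)
    (hpos₁ : μ (Z ⁻¹' {1}) ≠ 0) (hpos₀ : μ (Z ⁻¹' {0}) ≠ 0)
    (hD1 : ∀ z ω, D1 z ω = 0 ∨ D1 z ω = 1) (hindep : ∀ z, IndepFun (secondOnly D1 D2 z) Z μ) :
    dE μ Z (fun ω => obsDand Z D1 D2 ω - obsD2 Z D1 D2 ω) =
      -∫ ω, (secondOnly D1 D2 true ω - secondOnly D1 D2 false ω) ∂μ := by
  rw [dE_eq_integral_sub_integral (W := fun z ω => -secondOnly D1 D2 z ω) hZ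
    (fun z => (hint z).neg.aestronglyMeasurable) (fun z => (hindep z).neg_left) hpos₁ hpos₀
    (fun ω hω => obsDand_sub_obsD2_of_eq_one (hD1 true ω) hω)
    (fun ω hω => obsDand_sub_obsD2_of_eq_zero (hD1 false ω) hω),
    integral_neg, integral_neg, integral_sub (hint true) (hint false)]
  ring

theorem integral_secondOnly_true_sub_secondOnly_false [IsFiniteMeasure μ]
    (hD1meas : ∀ z, Measurable (D1 z)) (hD2meas : ∀ z d, Measurable (D2 z d))
    (hD1 : ∀ z ω, D1 z ω = 0 ∨ D1 z ω = 1) (hD2 : ∀ z d ω, D2 z d ω = 0 ∨ D2 z d ω = 1)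
    (hmono1 : ∀ᵐ ω ∂μ, D1 false ω ≤ D1 true ω)
    (hmono2 : ∀ᵐ ω ∂μ,
      D2 false true ω * D1 false ω + D2 false false ω * (1 - D1 false ω) ≤
        D2 true true ω * D1 true ω + D2 true false ω * (1 - D1 true ω)) :
    ∫ ω, (secondOnly D1 D2 true ω - secondOnly D1 D2 false ω) ∂μ =
      μ.real (NCev D1 D2) - μ.real (CAev D1 D2) := by
  have hNC : MeasurableSet (NCev D1 D2) := measurableSet_NCev hD1meas hD2meas
  have hCA : MeasurableSet (CAev D1 D2) := measurableSet_CAev hD1meas hD2meas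
  rw [← integral_indicator_one hNC, ← integral_indicator_one hCA,
    ← integral_sub ((integrable_const 1).indicator hNC) ((integrable_const 1).indicator hCA)]
  refine integral_congr_ae ?_
  filter_upwards [hmono1, hmono2] with ω h₁ h₂
  exact secondOnly_true_sub_secondOnly_false (hD1 · ω) (hD2 · · ω) h₁ h₂

theorem stmt_16_general [IsFiniteMeasure μ] (hZ : Measurable Z)
    (hD1meas : ∀ z, Measurable (D1 z)) (hD2meas : ∀ z d, Measurable (D2 z d))
    (hpos₁ : μ (Z ⁻¹' {1}) ≠ 0) (hpos₀ : μ (Z ⁻¹' {0}) ≠ 0)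
    (hD1 : ∀ z ω, D1 z ω = 0 ∨ D1 z ω = 1) (hD2 : ∀ z d ω, D2 z d ω = 0 ∨ D2 z d ω = 1)
    (hindep : ∀ z, IndepFun (secondOnly D1 D2 z) Z μ)
    (hmono1 : ∀ᵐ ω ∂μ, D1 false ω ≤ D1 true ω)
    (hmono2 : ∀ᵐ ω ∂μ,
      D2 false true ω * D1 false ω + D2 false false ω * (1 - D1 false ω) ≤
        D2 true true ω * D1 true ω + D2 true false ω * (1 - D1 true ω)) :
    dE μ Z (fun ω => obsDand Z D1 D2 ω - obsD2 Z D1 D2 ω) =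
      μ.real (CAev D1 D2) - μ.real (NCev D1 D2) ∧
    (μ (CAev D1 D2) = μ (NCev D1 D2) →
      dE μ Z (fun ω => obsDand Z D1 D2 ω - obsD2 Z D1 D2 ω) = 0) := by
  have hint (z : Bool) : Integrable (secondOnly D1 D2 z) μ :=
    integrable_secondOnly (hD1meas z) (hD2meas z false) (hD1 z) (hD2 z false)
  have hdE : dE μ Z (fun ω => obsDand Z D1 D2 ω - obsD2 Z D1 D2 ω) =
      μ.real (CAev D1 D2) - μ.real (NCev D1 D2) := by
    rw [dE_obsDand_sub_obsD2 hZ hint hpos₁ hpos₀ hD1 hindep,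
      integral_secondOnly_true_sub_secondOnly_false hD1meas hD2meas hD1 hD2 hmono1 hmono2, neg_sub]
  exact ⟨hdE, fun heq => by rw [hdE, Measure.real, Measure.real, heq, sub_self]⟩

end Expectations

theorem stmt_16
    (μ : Measure Ω) [IsProbabilityMeasure μ]
    (Z : Ω → ℝ) (D1 : Bool → Ω → ℝ) (D2 : Bool → Bool → Ω → ℝ)
    (Yp : Bool → Bool → Bool → Ω → ℝ)
    (hZmeas : Measurable Z)
    (hD1meas : ∀ b, Measurable (D1 b))
    (hD2meas : ∀ b b', Measurable (D2 b b'))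
    (hYmeas : ∀ z d1 d2, Measurable (Yp z d1 d2))
    (hYint : ∀ z d1 d2, Integrable (Yp z d1 d2) μ)
    (hZ01 : ∀ ω, Z ω = 0 ∨ Z ω = 1)
    (hZpos : 0 < μ (Z ⁻¹' {1})) (hZlt : μ (Z ⁻¹' {1}) < 1)
    (hD101 : ∀ b ω, D1 b ω = 0 ∨ D1 b ω = 1)
    (hD201 : ∀ b b' ω, D2 b b' ω = 0 ∨ D2 b b' ω = 1)
    (hindep : IndepFun
      (fun ω => ((fun b => D1 b ω), (fun b b' => D2 b b' ω), (fun z d1 d2 => Yp z d1 d2 ω))) Z μ)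
    (hrel1 : 0 < dE μ Z (obsD1 Z D1))
    (hrel2 : 0 < dE μ Z (obsD2 Z D1 D2))
    (hrelAnd : 0 < dE μ Z (obsDand Z D1 D2))
    (hrelOr : 0 < dE μ Z (obsDor Z D1 D2))
    (hmono1 : ∀ᵐ ω ∂μ, D1 false ω ≤ D1 true ω)
    (hmono2 : ∀ᵐ ω ∂μ,
      D2 false true ω * D1 false ω + D2 false false ω * (1 - D1 false ω) ≤
        D2 true true ω * D1 true ω + D2 true false ω * (1 - D1 true ω))
    (hexcl : ∀ d1 d2, ∀ᵐ ω ∂μ, Yp true d1 d2 ω = Yp false d1 d2 ω) :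
    dE μ Z (fun ω => obsDand Z D1 D2 ω - obsD2 Z D1 D2 ω) =
      (μ (CAev D1 D2)).toReal - (μ (NCev D1 D2)).toReal ∧
    (μ (CAev D1 D2) = μ (NCev D1 D2) →
      dE μ Z (fun ω => obsDand Z D1 D2 ω - obsD2 Z D1 D2 ω) = 0) := by
  have hφ (z : Bool) : Measurable fun p : (Bool → ℝ) × (Bool → Bool → ℝ) ×
      (Bool → Bool → Bool → ℝ) => (1 - p.1 z) * p.2.1 z false := by fun_prop
  exact stmt_16_general hZmeas hD1meas hD2meas hZpos.ne'
    (measure_preimage_zero_ne_zero hZmeas hZ01 hZlt) hD101 hD201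
    (fun z => hindep.comp (hφ z) measurable_id) hmono1 hmono2
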